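/- Let u be a monotone traveling wave solution of the balanced Allen-Cahn equation in the plane. Then ∂u/∂y is square integrable over the whole plane: ∫_{ℝ²} (∂u/∂y(x,y))² dx dy < ∞. -/

import Mathlib

open Real Filter MeasureTheory Metric

noncomputable def pdx (u : ℝ → ℝ → ℝ) (x y : ℝ) : ℝ := deriv (fun t => u t y) x

noncomputable def pdy (u : ℝ → ℝ → ℝ) (x y : ℝ) : ℝ := deriv (fun t => u x t) y

noncomputable def pdxx (u : ℝ → ℝ → ℝ) (x y : ℝ) : ℝ := deriv (fun t => pdx u t y) x

noncomputable def pdyy (u : ℝ → ℝ → ℝ) (x y : ℝ) : ℝ := deriv (fun t => pdy u x t) y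

/-- `F` is a balanced double-well potential. -/
def BalancedDoubleWell (F : ℝ → ℝ) : Prop :=
  ContDiff ℝ 3 F ∧ deriv F (-1) = 0 ∧ deriv F 1 = 0 ∧
  0 < deriv (deriv F) (-1) ∧ 0 < deriv (deriv F) 1 ∧
  (∀ s ∈ Set.Ioo (-1 : ℝ) 0, 0 < deriv F s) ∧
  (∀ s ∈ Set.Ioo (0 : ℝ) 1, deriv F s < 0) ∧
  F (-1) = 0 ∧ F 1 = 0

/-- `u` is a `C³` solution of `Δu + c uᵧ = F'(u)` on `ℝ²` with `|u| ≤ 1`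
which is monotone in `y`. -/
def IsSolution (F : ℝ → ℝ) (c : ℝ) (u : ℝ → ℝ → ℝ) : Prop :=
  ContDiff ℝ 3 (fun p : ℝ × ℝ => u p.1 p.2) ∧
  (∀ x y : ℝ, pdxx u x y + pdyy u x y + c * pdy u x y = deriv F (u x y)) ∧
  (∀ x y : ℝ, |u x y| ≤ 1) ∧
  (∀ x y : ℝ, 0 < pdy u x y)

/-- A monotone traveling wave solution connecting `-1` to `1`. -/
def IsTravelingWave (F : ℝ → ℝ) (c : ℝ) (u : ℝ → ℝ → ℝ) : Prop :=
  IsSolution F c u ∧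
  (∀ x : ℝ, Tendsto (fun y => u x y) atTop (nhds 1)) ∧
  (∀ x : ℝ, Tendsto (fun y => u x y) atBot (nhds (-1)))

open Set Topology in
theorem IsLocalMin.nonneg_of_hasDerivAt_hasDerivAt {f f' : ℝ → ℝ} {f'' x : ℝ}
    (hmin : IsLocalMin f x) (hf : ∀ t, HasDerivAt f (f' t) t) (hf' : HasDerivAt f' f'' x) :
    0 ≤ f'' := by
  by_contra! hneg
  have hderiv : deriv f = f' := funext fun t => (hf t).deriv
  have hmax : IsLocalMax f x :=
    isLocalMax_of_deriv_deriv_neg (by rwa [hderiv, hf'.deriv]) hmin.deriv_eq_zero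
      (hf x).continuousAt
  have hconst : f =ᶠ[𝓝 x] fun _ => f x := by
    filter_upwards [hmin, hmax] with t h₁ h₂ using le_antisymm h₂ h₁
  have hzero : f' =ᶠ[𝓝 x] fun _ => 0 := by
    filter_upwards [hconst.eventuallyEq_nhds] with t ht
    rw [← (hf t).deriv, ht.deriv_eq, deriv_const]
  have := hf'.unique (hzero.hasDerivAt_iff.2 (hasDerivAt_const x (0 : ℝ)))
  linarith

open Set Topology in
/-- Minimum principle for strict supersolutions of `Z_xx + Z_yy + c Z_y` on a rectangle. -/
theorem nonneg_of_strict_supersolution {c : ℝ} {Z Zx Zxx Zy Zyy : ℝ → ℝ → ℝ}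
    (hcont : Continuous fun p : ℝ × ℝ => Z p.1 p.2)
    (hx : ∀ x y, HasDerivAt (fun t => Z t y) (Zx x y) x)
    (hxx : ∀ x y, HasDerivAt (fun t => Zx t y) (Zxx x y) x)
    (hy : ∀ x y, HasDerivAt (fun t => Z x t) (Zy x y) y)
    (hyy : ∀ x y, HasDerivAt (fun t => Zy x t) (Zyy x y) y)
    {a₁ b₁ a₂ b₂ : ℝ}
    (hneg : ∀ x ∈ Ioo a₁ b₁, ∀ y ∈ Ioo a₂ b₂, Zxx x y + Zyy x y + c * Zy x y < 0)
    (hleft : ∀ y ∈ Icc a₂ b₂, 0 ≤ Z a₁ y) (hright : ∀ y ∈ Icc a₂ b₂, 0 ≤ Z b₁ y)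
    (hbot : ∀ x ∈ Icc a₁ b₁, 0 ≤ Z x a₂) (htop : ∀ x ∈ Icc a₁ b₁, 0 ≤ Z x b₂) :
    ∀ x ∈ Icc a₁ b₁, ∀ y ∈ Icc a₂ b₂, 0 ≤ Z x y := by
  intro x hx₀ y hy₀
  obtain ⟨⟨x', y'⟩, ⟨hx', hy'⟩, hmin⟩ := (isCompact_Icc.prod isCompact_Icc).exists_isMinOn
    (⟨(x, y), hx₀, hy₀⟩ : (Icc a₁ b₁ ×ˢ Icc a₂ b₂).Nonempty) hcont.continuousOn
  refine le_trans ?_ (isMinOn_iff.1 hmin (x, y) ⟨hx₀, hy₀⟩)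
  simp only at hx' hy' ⊢
  rcases hx'.1.eq_or_lt with rfl | h₁
  · exact hleft _ hy'
  rcases hx'.2.eq_or_lt with rfl | h₂
  · exact hright _ hy'
  rcases hy'.1.eq_or_lt with rfl | h₃
  · exact hbot _ hx'
  rcases hy'.2.eq_or_lt with rfl | h₄
  · exact htop _ hx'
  have hminx : IsLocalMin (fun t => Z t y') x' := by
    filter_upwards [Icc_mem_nhds h₁ h₂] with t ht using isMinOn_iff.1 hmin (t, y') ⟨ht, hy'⟩
  have hminy : IsLocalMin (fun t => Z x' t) y' := by
    filter_upwards [Icc_mem_nhds h₃ h₄] with t ht using isMinOn_iff.1 hmin (x', t) ⟨hx', ht⟩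
  have e₁ := hminx.nonneg_of_hasDerivAt_hasDerivAt (fun t => hx t y') (hxx x' y')
  have e₂ := hminy.nonneg_of_hasDerivAt_hasDerivAt (fun t => hy x' t) (hyy x' y')
  have e₃ := hminy.hasDerivAt_eq_zero (hy x' y')
  have := hneg x' ⟨h₁, h₂⟩ y' ⟨h₃, h₄⟩
  rw [e₃] at this
  linarith

open Set Topology in
theorem partial_deriv_le_of_bounded {c M N : ℝ} (hc : 0 ≤ c) (hM : 0 < M)
    {w wx wxx wy wyy : ℝ → ℝ → ℝ}
    (hcont : Continuous fun p : ℝ × ℝ => w p.1 p.2)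
    (hx : ∀ x y, HasDerivAt (fun t => w t y) (wx x y) x)
    (hxx : ∀ x y, HasDerivAt (fun t => wx t y) (wxx x y) x)
    (hy : ∀ x y, HasDerivAt (fun t => w x t) (wy x y) y)
    (hyy : ∀ x y, HasDerivAt (fun t => wy x t) (wyy x y) y)
    (hw : ∀ x y, |w x y| ≤ M) (hLw : ∀ x y, |wxx x y + wyy x y + c * wy x y| ≤ N) (x₀ y₀ : ℝ) :
    wx x₀ y₀ ≤ (3 + c) * M + N := by
  set B : ℝ := (2 + c) * M + N with hB
  have hN : 0 ≤ N := (abs_nonneg _).trans (hLw 0 0)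
  have hBpos : 0 < B := by positivity
  -- comparison of the odd part in `x` with an explicit barrier
  have key := nonneg_of_strict_supersolution (c := c) (a₁ := 0) (b₁ := 1) (a₂ := -1) (b₂ := 1)
    (Z := fun x y => M * y ^ 2 + (B + M) * x - B * x ^ 2
      - (w (x₀ + x) (y₀ + y) - w (x₀ - x) (y₀ + y)) / 2)
    (Zx := fun x y => (B + M) - 2 * B * x - (wx (x₀ + x) (y₀ + y) + wx (x₀ - x) (y₀ + y)) / 2)
    (Zxx := fun x y => - 2 * B - (wxx (x₀ + x) (y₀ + y) - wxx (x₀ - x) (y₀ + y)) / 2)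
    (Zy := fun x y => 2 * M * y - (wy (x₀ + x) (y₀ + y) - wy (x₀ - x) (y₀ + y)) / 2)
    (Zyy := fun x y => 2 * M - (wyy (x₀ + x) (y₀ + y) - wyy (x₀ - x) (y₀ + y)) / 2)
    (by
      have h₁ : Continuous fun p : ℝ × ℝ => w (x₀ + p.1) (y₀ + p.2) :=
        hcont.comp (by fun_prop : Continuous fun p : ℝ × ℝ => (x₀ + p.1, y₀ + p.2))
      have h₂ : Continuous fun p : ℝ × ℝ => w (x₀ - p.1) (y₀ + p.2) :=
        hcont.comp (by fun_prop : Continuous fun p : ℝ × ℝ => (x₀ - p.1, y₀ + p.2))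
      fun_prop)
    (fun x y => by
      have h₁ := (hx (x₀ + x) (y₀ + y)).comp_const_add x₀ x
      have h₂ := (hx (x₀ - x) (y₀ + y)).comp_const_sub x₀ x
      have h₃ := ((((hasDerivAt_id x).const_mul (B + M)).const_add (M * y ^ 2)).sub
        (((hasDerivAt_id x).pow 2).const_mul B)).sub ((h₁.sub h₂).div_const 2)
      refine h₃.congr_deriv ?_
      simp; ring)
    (fun x y => by
      have h₁ := (hxx (x₀ + x) (y₀ + y)).comp_const_add x₀ x
      have h₂ := (hxx (x₀ - x) (y₀ + y)).comp_const_sub x₀ x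
      have h₃ := (((hasDerivAt_id x).const_mul (2 * B)).const_sub (B + M)).sub
        ((h₁.add h₂).div_const 2)
      refine h₃.congr_deriv ?_
      simp; ring)
    (fun x y => by
      have h₁ := (hy (x₀ + x) (y₀ + y)).comp_const_add y₀ y
      have h₂ := (hy (x₀ - x) (y₀ + y)).comp_const_add y₀ y
      have h₃ := (((((hasDerivAt_id y).pow 2).const_mul M).add_const ((B + M) * x)).sub_const
        (B * x ^ 2)).sub ((h₁.sub h₂).div_const 2)
      refine h₃.congr_deriv ?_
      simp; ring)
    (fun x y => by
      have h₁ := (hyy (x₀ + x) (y₀ + y)).comp_const_add y₀ y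
      have h₂ := (hyy (x₀ - x) (y₀ + y)).comp_const_add y₀ y
      have h₃ := ((hasDerivAt_id y).const_mul (2 * M)).sub ((h₁.sub h₂).div_const 2)
      refine h₃.congr_deriv ?_
      simp)
    (fun x _ y hy' => by
      have h₁ := (abs_le.1 (hLw (x₀ + x) (y₀ + y))).1
      have h₂ := (abs_le.1 (hLw (x₀ - x) (y₀ + y))).2
      have h₃ : c * M * y ≤ c * M * 1 := by
        gcongr
        exact hy'.2.le
      simp only [hB]
      nlinarith)
    (fun y _ => by
      simp only [add_zero, sub_zero]
      nlinarith [sq_nonneg y])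
    (fun y _ => by
      have h₁ := (abs_le.1 (hw (x₀ + 1) (y₀ + y))).2
      have h₂ := (abs_le.1 (hw (x₀ - 1) (y₀ + y))).1
      nlinarith [sq_nonneg y])
    (fun x hx' => by
      have h₁ := (abs_le.1 (hw (x₀ + x) (y₀ + -1))).2
      have h₂ := (abs_le.1 (hw (x₀ - x) (y₀ + -1))).1
      have h₃ : 0 ≤ B * (x * (1 - x)) :=
        mul_nonneg hBpos.le (mul_nonneg hx'.1 (sub_nonneg.2 hx'.2))
      nlinarith [mul_nonneg hM.le hx'.1])
    (fun x hx' => by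
      have h₁ := (abs_le.1 (hw (x₀ + x) (y₀ + 1))).2
      have h₂ := (abs_le.1 (hw (x₀ - x) (y₀ + 1))).1
      have h₃ : 0 ≤ B * (x * (1 - x)) :=
        mul_nonneg hBpos.le (mul_nonneg hx'.1 (sub_nonneg.2 hx'.2))
      nlinarith [mul_nonneg hM.le hx'.1])
  have hd : HasDerivAt (fun t => (w (x₀ + t) y₀ - w (x₀ - t) y₀) / 2) (wx x₀ y₀) 0 := by
    have h₁ := HasDerivAt.comp_const_add x₀ 0 (by simpa using hx x₀ y₀)
    have h₂ := HasDerivAt.comp_const_sub x₀ 0 (by simpa using hx x₀ y₀)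
    exact ((h₁.sub h₂).div_const 2).congr_deriv (by ring)
  refine le_of_tendsto hd.tendsto_slope_zero_right ?_
  filter_upwards [Ioo_mem_nhdsGT (zero_lt_one' ℝ)] with t ht
  have h₀ := key t ⟨ht.1.le, ht.2.le⟩ 0 (by norm_num)
  simp only [add_zero, zero_add, sub_zero, sub_self, zero_div, smul_eq_mul] at h₀ ⊢
  rw [inv_mul_le_iff₀ ht.1]
  nlinarith [mul_pos hBpos (pow_pos ht.1 2)]

/-- Interior gradient estimate: a bounded `w` with bounded `w_xx + w_yy + c w_y` has bounded
`w_x`. -/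
theorem abs_partial_deriv_le_of_bounded {c M N : ℝ} (hc : 0 ≤ c) (hM : 0 < M)
    {w wx wxx wy wyy : ℝ → ℝ → ℝ}
    (hcont : Continuous fun p : ℝ × ℝ => w p.1 p.2)
    (hx : ∀ x y, HasDerivAt (fun t => w t y) (wx x y) x)
    (hxx : ∀ x y, HasDerivAt (fun t => wx t y) (wxx x y) x)
    (hy : ∀ x y, HasDerivAt (fun t => w x t) (wy x y) y)
    (hyy : ∀ x y, HasDerivAt (fun t => wy x t) (wyy x y) y)
    (hw : ∀ x y, |w x y| ≤ M) (hLw : ∀ x y, |wxx x y + wyy x y + c * wy x y| ≤ N) (x y : ℝ) :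
    |wx x y| ≤ (3 + c) * M + N := by
  refine abs_le'.2 ⟨partial_deriv_le_of_bounded hc hM hcont hx hxx hy hyy hw hLw x y,
    partial_deriv_le_of_bounded hc hM (w := fun x y => - w x y) (wx := fun x y => - wx x y)
      (wxx := fun x y => - wxx x y) (wy := fun x y => - wy x y) (wyy := fun x y => - wyy x y)
      hcont.neg (fun x y => (hx x y).neg) (fun x y => (hxx x y).neg) (fun x y => (hy x y).neg)
      (fun x y => (hyy x y).neg) (fun x y => by simpa using hw x y) (fun x y => ?_) x y⟩
  rw [← abs_neg]
  refine le_trans (le_of_eq ?_) (hLw x y)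
  congr 1
  ring

open Topology in
/-- If the functions `f i` have uniformly bounded second derivatives and converge pointwise to a
constant, then their derivatives converge to zero. -/
theorem tendsto_deriv_zero_of_bounded_second_deriv {ι : Type*} {l : Filter ι}
    {f f' f'' : ι → ℝ → ℝ} {K L : ℝ}
    (hf : ∀ i t, HasDerivAt (f i) (f' i t) t) (hf' : ∀ i t, HasDerivAt (f' i) (f'' i t) t)
    (hK : ∀ i t, |f'' i t| ≤ K) (g : ι → ℝ)
    (hlim : ∀ h, Tendsto (fun i => f i (g i + h)) l (𝓝 L)) :
    Tendsto (fun i => f' i (g i)) l (𝓝 0) := by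
  rw [Metric.tendsto_nhds]
  intro ε hε
  have hK' : 0 ≤ |K| := abs_nonneg K
  obtain ⟨h, hh, hhK⟩ : ∃ h : ℝ, 0 < h ∧ |K| * h < ε / 2 := by
    refine ⟨ε / (2 * (|K| + 1)), by positivity, ?_⟩
    rw [← mul_div_assoc, div_lt_div_iff₀ (by positivity) (by positivity)]
    nlinarith
  have hdiff : Tendsto (fun i => f i (g i + h) - f i (g i + 0)) l (𝓝 0) := by
    simpa using (hlim h).sub (hlim 0)
  filter_upwards [Metric.tendsto_nhds.1 hdiff (h * (ε / 2)) (by positivity)] with i hi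
  simp only [add_zero, Real.dist_eq, sub_zero] at hi ⊢
  obtain ⟨ξ, hξ, hslope⟩ := exists_hasDerivAt_eq_slope (f i) (f' i)
    (show g i < g i + h by linarith) (fun t _ => (hf i t).continuousAt.continuousWithinAt)
    (fun t _ => hf i t)
  rw [add_sub_cancel_left, eq_div_iff hh.ne'] at hslope
  have hlip : ‖f' i ξ - f' i (g i)‖ ≤ |K| * ‖ξ - g i‖ :=
    convex_univ.norm_image_sub_le_of_norm_hasDerivWithin_le
      (fun t _ => (hf' i t).hasDerivWithinAt) (fun t _ => (hK i t).trans (le_abs_self K))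
      (Set.mem_univ _) (Set.mem_univ _)
  rw [Real.norm_eq_abs, Real.norm_eq_abs, abs_of_pos (sub_pos.2 hξ.1)] at hlip
  have h₁ : |f' i ξ| < ε / 2 := by
    rw [← hslope, abs_mul, abs_of_pos hh, mul_comm] at hi
    exact lt_of_mul_lt_mul_left hi hh.le
  have h₂ : |K| * (ξ - g i) ≤ |K| * h := by
    gcongr
    linarith [hξ.2]
  have h₃ := abs_sub_abs_le_abs_sub (f' i (g i)) (f' i ξ)
  rw [abs_sub_comm] at h₃
  linarith

section Regularity

variable {u : ℝ → ℝ → ℝ}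

theorem hasDerivAt_pdx (hu : ContDiff ℝ 1 fun p : ℝ × ℝ => u p.1 p.2) (x y : ℝ) :
    HasDerivAt (fun t => u t y) (pdx u x y) x := by
  have : Differentiable ℝ fun t => u t y :=
    (hu.differentiable one_ne_zero).comp (by fun_prop : Differentiable ℝ fun t : ℝ => (t, y))
  exact (this x).hasDerivAt

theorem hasDerivAt_pdy (hu : ContDiff ℝ 1 fun p : ℝ × ℝ => u p.1 p.2) (x y : ℝ) :
    HasDerivAt (fun t => u x t) (pdy u x y) y := by
  have : Differentiable ℝ fun t => u x t :=
    (hu.differentiable one_ne_zero).comp (by fun_prop : Differentiable ℝ fun t : ℝ => (x, t))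
  exact (this y).hasDerivAt

theorem pdx_eq_fderiv (hu : ContDiff ℝ 1 fun p : ℝ × ℝ => u p.1 p.2) (x y : ℝ) :
    pdx u x y = fderiv ℝ (fun p : ℝ × ℝ => u p.1 p.2) (x, y) (1, 0) := by
  have h := (hu.differentiable one_ne_zero (x, y)).hasFDerivAt
  exact (h.comp_hasDerivAt x ((hasDerivAt_id x).prodMk (hasDerivAt_const x y))).deriv

theorem pdy_eq_fderiv (hu : ContDiff ℝ 1 fun p : ℝ × ℝ => u p.1 p.2) (x y : ℝ) :
    pdy u x y = fderiv ℝ (fun p : ℝ × ℝ => u p.1 p.2) (x, y) (0, 1) := by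
  have h := (hu.differentiable one_ne_zero (x, y)).hasFDerivAt
  exact (h.comp_hasDerivAt y ((hasDerivAt_const y x).prodMk (hasDerivAt_id y))).deriv

theorem contDiff_pdx {n : ℕ} (hu : ContDiff ℝ (n + 1) fun p : ℝ × ℝ => u p.1 p.2) :
    ContDiff ℝ n fun p : ℝ × ℝ => pdx u p.1 p.2 := by
  simp_rw [pdx_eq_fderiv (hu.of_le le_add_self)]
  exact (hu.fderiv_right le_rfl).clm_apply contDiff_const

theorem contDiff_pdy {n : ℕ} (hu : ContDiff ℝ (n + 1) fun p : ℝ × ℝ => u p.1 p.2) :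
    ContDiff ℝ n fun p : ℝ × ℝ => pdy u p.1 p.2 := by
  simp_rw [pdy_eq_fderiv (hu.of_le le_add_self)]
  exact (hu.fderiv_right le_rfl).clm_apply contDiff_const

theorem pdx_pdy_comm (hu : ContDiff ℝ 2 fun p : ℝ × ℝ => u p.1 p.2) (x y : ℝ) :
    pdx (pdy u) x y = pdy (pdx u) x y := by
  have h1 : ContDiff ℝ 1 fun p : ℝ × ℝ => u p.1 p.2 := hu.of_le one_le_two
  have h2 : ContDiff ℝ ((1 : ℕ) + 1) fun p : ℝ × ℝ => u p.1 p.2 := by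
    convert hu
    norm_num
  have hd : DifferentiableAt ℝ (fderiv ℝ fun p : ℝ × ℝ => u p.1 p.2) (x, y) :=
    (h2.fderiv_right le_rfl).differentiable one_ne_zero _
  rw [pdx_eq_fderiv (contDiff_pdy h2), pdy_eq_fderiv (contDiff_pdx h2)]
  simp_rw [pdx_eq_fderiv h1, pdy_eq_fderiv h1]
  rw [fderiv_clm_apply hd (differentiableAt_const _), fderiv_clm_apply hd (differentiableAt_const _)]
  simpa using second_derivative_symmetric
    (fun p => (h1.differentiable one_ne_zero p).hasFDerivAt) hd.hasFDerivAt (1, 0) (0, 1)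

end Regularity

section Wave

variable {F : ℝ → ℝ} {c : ℝ} {u : ℝ → ℝ → ℝ}

theorem IsSolution.hasDerivAts (hu : IsSolution F c u) :
    (∀ x y, HasDerivAt (fun t => u t y) (pdx u x y) x) ∧
    (∀ x y, HasDerivAt (fun t => pdx u t y) (pdxx u x y) x) ∧
    (∀ x y, HasDerivAt (fun t => u x t) (pdy u x y) y) ∧
    (∀ x y, HasDerivAt (fun t => pdy u x t) (pdyy u x y) y) := by
  have h1 : ContDiff ℝ 1 fun p : ℝ × ℝ => u p.1 p.2 := hu.1.of_le (by norm_num)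
  have h2 : ContDiff ℝ ((1 : ℕ) + 1) fun p : ℝ × ℝ => u p.1 p.2 := hu.1.of_le (by norm_num)
  exact ⟨hasDerivAt_pdx h1, hasDerivAt_pdx (contDiff_pdx h2), hasDerivAt_pdy h1,
    hasDerivAt_pdy (contDiff_pdy h2)⟩

theorem exists_forall_abs_le_on_Icc {f : ℝ → ℝ} (hf : Continuous f) :
    ∃ N, 0 ≤ N ∧ ∀ s, |s| ≤ 1 → |f s| ≤ N := by
  obtain ⟨N, hN⟩ := (isCompact_Icc (a := (-1 : ℝ)) (b := 1)).exists_bound_of_continuousOn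
    hf.continuousOn
  exact ⟨N, (norm_nonneg _).trans (hN 0 (by norm_num)), fun s hs => hN s (abs_le.1 hs)⟩

theorem IsSolution.exists_abs_pdx_le (hF : ContDiff ℝ 3 F) (hc : 0 < c) (hu : IsSolution F c u) :
    ∃ A, 0 < A ∧ ∀ x y, |pdx u x y| ≤ A := by
  obtain ⟨N, hN, hFN⟩ := exists_forall_abs_le_on_Icc (hF.continuous_deriv (by norm_num))
  obtain ⟨hx, hxx, hy, hyy⟩ := hu.hasDerivAts
  obtain ⟨hC, heq, hb, -⟩ := hu
  exact ⟨(3 + c) * 1 + N, by positivity, abs_partial_deriv_le_of_bounded hc.le one_pos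
    hC.continuous hx hxx hy hyy hb fun x y => by simpa only [heq] using hFN _ (hb x y)⟩

theorem IsSolution.exists_abs_pdxx_le (hF : ContDiff ℝ 3 F) (hc : 0 < c) (hu : IsSolution F c u) :
    ∃ A, 0 < A ∧ ∀ x y, |pdxx u x y| ≤ A := by
  obtain ⟨A, hA, hAb⟩ := hu.exists_abs_pdx_le hF hc
  have hF' : ContDiff ℝ 2 (deriv F) :=
    (contDiff_succ_iff_deriv.1 (by norm_num; exact hF : ContDiff ℝ (2 + 1) F)).2.2
  obtain ⟨K, hK, hFK⟩ := exists_forall_abs_le_on_Icc (hF'.continuous_deriv (by norm_num))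
  obtain ⟨hx, hxx, hy, hyy⟩ := hu.hasDerivAts
  obtain ⟨hC, heq, hb, -⟩ := hu
  have hlip : ∀ x h y, |u (x + h) y - u x y| ≤ A * |h| := fun x h y => by
    have := convex_univ.norm_image_sub_le_of_norm_hasDerivWithin_le
      (fun t _ => (hx t y).hasDerivWithinAt) (fun t _ => hAb t y)
      (Set.mem_univ x) (Set.mem_univ (x + h))
    simpa using this
  have hFlip : ∀ s t, |s| ≤ 1 → |t| ≤ 1 → |deriv F t - deriv F s| ≤ K * |t - s| :=
    fun s t hs ht => (convex_Icc (-1 : ℝ) 1).norm_image_sub_le_of_norm_deriv_le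
      (fun r _ => hF'.differentiable (by norm_num) r) (fun r hr => hFK r (abs_le.2 hr))
      (abs_le.1 hs) (abs_le.1 ht)
  have hpos : 0 < (3 + c) * A + K * A := by positivity
  refine ⟨_, hpos, fun x y => HasDerivAt.le_of_lip' (hxx x y) hpos.le (.of_forall fun t => ?_)⟩
  rcases eq_or_ne t x with rfl | htx
  · simp
  have hh : 0 < |t - x| := abs_pos.2 (sub_ne_zero.2 htx)
  have key := abs_partial_deriv_le_of_bounded hc.le (mul_pos hA hh) (N := K * (A * |t - x|))
    (w := fun z y => u (z + (t - x)) y - u z y)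
    (wx := fun z y => pdx u (z + (t - x)) y - pdx u z y)
    (wxx := fun z y => pdxx u (z + (t - x)) y - pdxx u z y)
    (wy := fun z y => pdy u (z + (t - x)) y - pdy u z y)
    (wyy := fun z y => pdyy u (z + (t - x)) y - pdyy u z y)
    ((hC.continuous.comp
      (by fun_prop : Continuous fun p : ℝ × ℝ => (p.1 + (t - x), p.2))).sub hC.continuous)
    (fun z y => ((hx _ y).comp_add_const z (t - x)).sub (hx z y))
    (fun z y => ((hxx _ y).comp_add_const z (t - x)).sub (hxx z y))
    (fun z y => (hy _ y).sub (hy z y)) (fun z y => (hyy _ y).sub (hyy z y))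
    (fun z y => hlip z (t - x) y)
    (fun z y => by
      have h₁ := hFlip _ _ (hb z y) (hb (z + (t - x)) y)
      rw [← heq, ← heq] at h₁
      refine le_trans (le_of_eq ?_) (h₁.trans (mul_le_mul_of_nonneg_left (hlip z (t - x) y) hK))
      congr 1
      ring) x y
  simp only [add_sub_cancel, Real.norm_eq_abs] at key ⊢
  refine key.trans (le_of_eq ?_)
  ring

theorem IsSolution.exists_abs_pdy_le (hF : ContDiff ℝ 3 F) (hc : 0 < c) (hu : IsSolution F c u) :
    ∃ A, 0 < A ∧ ∀ x y, |pdy u x y| ≤ A := by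
  obtain ⟨B, hB, hBb⟩ := hu.exists_abs_pdxx_le hF hc
  obtain ⟨N, hN, hFN⟩ := exists_forall_abs_le_on_Icc (hF.continuous_deriv (by norm_num))
  obtain ⟨-, -, hy, hyy⟩ := hu.hasDerivAts
  obtain ⟨-, heq, hb, hpos⟩ := hu
  refine ⟨2 + (N + B) + 2 * c, by positivity, fun x y => ?_⟩
  rw [abs_of_pos (hpos x y)]
  obtain ⟨ξ, hξ, hslope⟩ := exists_hasDerivAt_eq_slope (fun t => u x t) (fun t => pdy u x t)
    (sub_one_lt y) (fun t _ => (hy x t).continuousAt.continuousWithinAt) (fun t _ => hy x t)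
  rw [sub_sub_cancel, div_one] at hslope
  have hlip : ‖(pdy u x y + c * u x y) - (pdy u x ξ + c * u x ξ)‖ ≤ (N + B) * ‖y - ξ‖ := by
    refine convex_univ.norm_image_sub_le_of_norm_hasDerivWithin_le
      (f := fun t => pdy u x t + c * u x t)
      (fun t _ => ((hyy x t).add ((hy x t).const_mul c)).hasDerivWithinAt) (fun t _ => ?_)
      (Set.mem_univ ξ) (Set.mem_univ y)
    rw [eq_sub_of_add_eq' ((add_assoc _ _ _).symm.trans (heq x t))]
    exact (norm_sub_le _ _).trans (add_le_add (hFN _ (hb x t)) (hBb x t))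
  rw [Real.norm_eq_abs, Real.norm_eq_abs, abs_of_pos (sub_pos.2 hξ.2)] at hlip
  have h₁ : (N + B) * (y - ξ) ≤ (N + B) * 1 := by
    gcongr
    linarith [hξ.1]
  have h₂ := abs_le.1 (hb x y)
  have h₃ := abs_le.1 (hb x ξ)
  have h₄ := abs_le.1 (hb x (y - 1))
  have h₅ := (abs_le.1 hlip).2
  nlinarith

theorem IsSolution.exists_abs_pdyy_le (hF : ContDiff ℝ 3 F) (hc : 0 < c) (hu : IsSolution F c u) :
    ∃ A, 0 < A ∧ ∀ x y, |pdyy u x y| ≤ A := by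
  obtain ⟨B, hB, hBb⟩ := hu.exists_abs_pdxx_le hF hc
  obtain ⟨D, hD, hDb⟩ := hu.exists_abs_pdy_le hF hc
  obtain ⟨N, hN, hFN⟩ := exists_forall_abs_le_on_Icc (hF.continuous_deriv (by norm_num))
  refine ⟨N + B + c * D, by positivity, fun x y => ?_⟩
  have h₁ := abs_le.1 (hBb x y)
  have h₂ := abs_le.1 (hDb x y)
  have h₃ := abs_le.1 (hFN _ (hu.2.2.1 x y))
  have h₄ := hu.2.1 x y
  rw [abs_le]
  constructor <;> nlinarith

/-- The vertical flux in the divergence form of the equation multiplied by `u_y`. -/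
noncomputable def verticalFlux (F : ℝ → ℝ) (u : ℝ → ℝ → ℝ) (x y : ℝ) : ℝ :=
  ((pdy u x y) ^ 2 - (pdx u x y) ^ 2) / 2 - F (u x y)

theorem IsSolution.contDiff_partials (hu : IsSolution F c u) :
    (ContDiff ℝ 2 fun p : ℝ × ℝ => pdx u p.1 p.2) ∧
    (ContDiff ℝ 2 fun p : ℝ × ℝ => pdy u p.1 p.2) := by
  have h3 : ContDiff ℝ ((2 : ℕ) + 1) fun p : ℝ × ℝ => u p.1 p.2 := hu.1.of_le (by norm_num)
  exact ⟨contDiff_pdx h3, contDiff_pdy h3⟩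

theorem IsSolution.contDiff_verticalFlux (hF : ContDiff ℝ 3 F) (hu : IsSolution F c u) :
    ContDiff ℝ 2 fun p : ℝ × ℝ => verticalFlux F u p.1 p.2 := by
  obtain ⟨hX, hY⟩ := hu.contDiff_partials
  have hFu : ContDiff ℝ 2 fun p : ℝ × ℝ => F (u p.1 p.2) :=
    (hF.comp hu.1).of_le (by norm_num)
  exact (((hY.pow 2).sub (hX.pow 2)).div_const 2).sub hFu

theorem IsSolution.divergence_eq (hF : ContDiff ℝ 3 F) (hu : IsSolution F c u) (p : ℝ × ℝ) :
    fderiv ℝ (fun q : ℝ × ℝ => pdx u q.1 q.2 * pdy u q.1 q.2) p (1, 0) +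
      fderiv ℝ (fun q : ℝ × ℝ => verticalFlux F u q.1 q.2) p (0, 1) =
    -c * (pdy u p.1 p.2) ^ 2 := by
  obtain ⟨x, y⟩ := p
  obtain ⟨hX, hY⟩ := hu.contDiff_partials
  have h12 : (1 : WithTop ℕ∞) ≤ 2 := one_le_two
  have hXY : ContDiff ℝ 1 fun q : ℝ × ℝ => pdx u q.1 q.2 * pdy u q.1 q.2 :=
    (hX.mul hY).of_le h12
  have hG := (hu.contDiff_verticalFlux hF).of_le h12
  obtain ⟨-, hxx, hy, hyy⟩ := hu.hasDerivAts
  rw [← pdx_eq_fderiv (u := fun x y => pdx u x y * pdy u x y) hXY, ← pdy_eq_fderiv hG]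
  have e₁ : pdx (fun x y => pdx u x y * pdy u x y) x y =
      pdxx u x y * pdy u x y + pdx u x y * pdx (pdy u) x y :=
    ((hxx x y).mul (hasDerivAt_pdx (hY.of_le h12) x y)).deriv
  have hFd : HasDerivAt F (deriv F (u x y)) (u x y) :=
    (hF.differentiable (by norm_num) _).hasDerivAt
  have e₂ : pdy (verticalFlux F u) x y =
      (2 * pdy u x y * pdyy u x y - 2 * pdx u x y * pdy (pdx u) x y) / 2
        - deriv F (u x y) * pdy u x y := by
    have h := (((((hyy x y).pow 2).sub ((hasDerivAt_pdy (hX.of_le h12) x y).pow 2)).div_const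
      2).sub (hFd.comp y (hy x y)))
    refine h.deriv.trans ?_
    norm_num
  rw [e₁, e₂, pdx_pdy_comm (hu.1.of_le (by norm_num)), ← hu.2.1 x y]
  ring

theorem IsSolution.integral_pdy_sq_eq (hF : ContDiff ℝ 3 F) (hu : IsSolution F c u)
    {R S : ℝ} (hR : 0 ≤ R) (hS : 0 ≤ S) :
    c * ∫ p in Set.Icc (-R, -S) (R, S), (pdy u p.1 p.2) ^ 2 =
      (∫ y in -S..S, pdx u (-R) y * pdy u (-R) y) - (∫ y in -S..S, pdx u R y * pdy u R y) +
      ((∫ x in -R..R, verticalFlux F u x (-S)) - ∫ x in -R..R, verticalFlux F u x S) := by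
  obtain ⟨hX, hY⟩ := hu.contDiff_partials
  have hXY := hX.mul hY
  have hG := hu.contDiff_verticalFlux hF
  have hdiv := funext (hu.divergence_eq hF)
  have h := integral_divergence_prod_Icc_of_hasFDerivAt_of_le
    (fun q : ℝ × ℝ => pdx u q.1 q.2 * pdy u q.1 q.2)
    (fun q : ℝ × ℝ => verticalFlux F u q.1 q.2) _ _ (-R, -S) (R, S)
    ⟨by simp; linarith, by simp; linarith⟩ hXY.continuous.continuousOn hG.continuous.continuousOn
    (fun p _ => (hXY.differentiable two_ne_zero p).hasFDerivAt)
    (fun p _ => (hG.differentiable two_ne_zero p).hasFDerivAt)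
    (by
      rw [hdiv]
      exact (continuous_const.mul (hY.continuous.pow 2)).continuousOn.integrableOn_compact
        isCompact_Icc)
  rw [hdiv, integral_const_mul] at h
  linarith

theorem IsSolution.abs_integral_pdx_mul_pdy_le (hu : IsSolution F c u) {A : ℝ}
    (hA : ∀ x y, |pdx u x y| ≤ A) (x : ℝ) {S : ℝ} (hS : 0 ≤ S) :
    |∫ y in -S..S, pdx u x y * pdy u x y| ≤ 2 * A := by
  have hA0 : 0 ≤ A := (abs_nonneg _).trans (hA 0 0)
  obtain ⟨-, hY⟩ := hu.contDiff_partials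
  obtain ⟨-, -, hy, -⟩ := hu.hasDerivAts
  have hYc : Continuous fun y => pdy u x y :=
    hY.continuous.comp (by fun_prop : Continuous fun y : ℝ => (x, y))
  have hint : ∫ y in -S..S, pdy u x y = u x S - u x (-S) :=
    intervalIntegral.integral_eq_sub_of_hasDerivAt (fun y _ => hy x y)
      (hYc.intervalIntegrable _ _)
  have hle : ‖∫ y in -S..S, pdx u x y * pdy u x y‖ ≤ ∫ y in -S..S, A * pdy u x y := by
    refine intervalIntegral.norm_integral_le_of_norm_le (by linarith) (.of_forall fun y _ => ?_)
      ((continuous_const.mul hYc).intervalIntegrable _ _)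
    rw [norm_mul, Real.norm_eq_abs, Real.norm_eq_abs, abs_of_pos (hu.2.2.2 x y)]
    exact mul_le_mul_of_nonneg_right (hA x y) (hu.2.2.2 x y).le
  rw [intervalIntegral.integral_const_mul, hint] at hle
  have h₁ := abs_le.1 (hu.2.2.1 x S)
  have h₂ := abs_le.1 (hu.2.2.1 x (-S))
  refine hle.trans ?_
  nlinarith

open Topology in
theorem IsSolution.tendsto_integral_verticalFlux (hF : ContDiff ℝ 3 F) (hc : 0 < c)
    (hu : IsSolution F c u) {l : Filter ℝ} [l.IsCountablyGenerated] {L : ℝ} (hL : F L = 0)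
    (hshift : ∀ h, Tendsto (fun y => y + h) l l)
    (hlim : ∀ x, Tendsto (fun y => u x y) l (𝓝 L)) (R : ℝ) :
    Tendsto (fun y => ∫ x in -R..R, verticalFlux F u x y) l (𝓝 0) := by
  obtain ⟨A, hA, hAb⟩ := hu.exists_abs_pdx_le hF hc
  obtain ⟨B, -, hBb⟩ := hu.exists_abs_pdxx_le hF hc
  obtain ⟨D, hD, hDb⟩ := hu.exists_abs_pdy_le hF hc
  obtain ⟨E, -, hEb⟩ := hu.exists_abs_pdyy_le hF hc
  obtain ⟨N, -, hFN⟩ := exists_forall_abs_le_on_Icc hF.continuous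
  obtain ⟨hx, hxx, hy, hyy⟩ := hu.hasDerivAts
  have hpx : ∀ x, Tendsto (fun y => pdx u x y) l (𝓝 0) := fun x =>
    tendsto_deriv_zero_of_bounded_second_deriv (f := fun y t => u t y)
      (fun y t => hx t y) (fun y t => hxx t y) (fun y t => hBb t y) (fun _ => x)
      (fun h => hlim (x + h))
  have hpy : ∀ x, Tendsto (fun y => pdy u x y) l (𝓝 0) := fun x =>
    tendsto_deriv_zero_of_bounded_second_deriv (f := fun _ t => u x t)
      (fun _ t => hy x t) (fun _ t => hyy x t) (fun _ t => hEb x t) id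
      (fun h => (hlim x).comp (hshift h))
  have hflux : ∀ x, Tendsto (fun y => verticalFlux F u x y) l (𝓝 0) := fun x => by
    have h := ((((hpy x).pow 2).sub ((hpx x).pow 2)).div_const 2).sub
      ((hF.continuous.tendsto L).comp (hlim x))
    simpa [hL, verticalFlux] using h
  have hG := (hu.contDiff_verticalFlux hF).continuous
  have h := intervalIntegral.tendsto_integral_filter_of_dominated_convergence
    (μ := volume) (a := -R) (b := R) (F := fun y x => verticalFlux F u x y) (f := fun _ => 0)
    (fun _ => (D ^ 2 + A ^ 2) / 2 + N)
    (.of_forall fun y => (hG.comp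
      (by fun_prop : Continuous fun x : ℝ => (x, y))).aestronglyMeasurable)
    (.of_forall fun y => .of_forall fun x _ => by
      have h₁ := sq_le_sq' (abs_le.1 (hAb x y)).1 (abs_le.1 (hAb x y)).2
      have h₂ := sq_le_sq' (abs_le.1 (hDb x y)).1 (abs_le.1 (hDb x y)).2
      have h₃ := abs_le.1 (hFN _ (hu.2.2.1 x y))
      rw [Real.norm_eq_abs, verticalFlux, abs_le]
      constructor <;> linarith [sq_nonneg (pdx u x y), sq_nonneg (pdy u x y)])
    intervalIntegrable_const (.of_forall fun x _ => hflux x)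
  simpa using h

theorem aecover_Icc_prod {s : ℕ → ℝ} (hs : ∀ n : ℕ, (n : ℝ) ≤ s n) :
    AECover (volume : Measure (ℝ × ℝ)) atTop
      fun n : ℕ => Set.Icc (-(n : ℝ), -s n) ((n : ℝ), s n) where
  ae_eventually_mem := .of_forall fun p => by
    filter_upwards [eventually_ge_atTop ⌈max |p.1| |p.2|⌉₊] with n hn
    have h := (Nat.le_ceil _).trans (Nat.cast_le (α := ℝ).2 hn)
    have h₁ := abs_le.1 ((le_max_left _ _).trans h)
    have h₂ := abs_le.1 (((le_max_right _ _).trans h).trans (hs n))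
    exact ⟨⟨h₁.1, h₂.1⟩, ⟨h₁.2, h₂.2⟩⟩
  measurableSet _ := measurableSet_Icc

end Wave

/-- `uᵧ` is square integrable over the plane (Lemma 2.1). -/
theorem uy_square_integrable
    (F : ℝ → ℝ) (hF : BalancedDoubleWell F) (c : ℝ) (hc : 0 < c)
    (u : ℝ → ℝ → ℝ) (hu : IsTravelingWave F c u) :
    Integrable (fun p : ℝ × ℝ => (pdy u p.1 p.2) ^ 2) := by
  obtain ⟨hF3, -, -, -, -, -, -, hFm, hFp⟩ := hF
  obtain ⟨hsol, htop, hbot⟩ := hu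
  obtain ⟨A, -, hA⟩ := hsol.exists_abs_pdx_le hF3 hc
  have hbound : ∀ R : ℝ, 0 ≤ R → ∃ S, R ≤ S ∧
      ∫ p in Set.Icc (-R, -S) (R, S), (pdy u p.1 p.2) ^ 2 ≤ (4 * A + 1) / c := by
    intro R hR
    have hT := hsol.tendsto_integral_verticalFlux hF3 hc hFp
      (fun h => tendsto_atTop_add_const_right _ h tendsto_id) htop R
    have hB := (hsol.tendsto_integral_verticalFlux hF3 hc hFm
      (fun h => tendsto_atBot_add_const_right _ h tendsto_id) hbot R).comp tendsto_neg_atTop_atBot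
    have hlim := hB.sub hT
    rw [sub_zero] at hlim
    obtain ⟨S, hS, hRS⟩ :=
      ((hlim.eventually (gt_mem_nhds one_pos)).and (eventually_ge_atTop R)).exists
    refine ⟨S, hRS, ?_⟩
    have hS0 := hR.trans hRS
    rw [le_div_iff₀' hc, hsol.integral_pdy_sq_eq hF3 hR hS0]
    have h₁ := abs_le.1 (hsol.abs_integral_pdx_mul_pdy_le hA (-R) hS0)
    have h₂ := abs_le.1 (hsol.abs_integral_pdx_mul_pdy_le hA R hS0)
    simp only [Function.comp_apply] at hS
    linarith
  choose s hs using fun n : ℕ => hbound n n.cast_nonneg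
  have hcont : Continuous fun p : ℝ × ℝ => (pdy u p.1 p.2) ^ 2 :=
    hsol.contDiff_partials.2.continuous.pow 2
  exact (aecover_Icc_prod fun n => (hs n).1).integrable_of_integral_bounded_of_nonneg_ae
    ((4 * A + 1) / c) (fun n => hcont.continuousOn.integrableOn_compact isCompact_Icc)
    (.of_forall fun p => sq_nonneg _) (.of_forall fun n => (hs n).2)
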